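/- Let C be an arbitrary set of corner-interval minors of M and let P be a minimal prime ideal of I(C). Then there exists an admissible set W ⊆ V(C) such that P = P_W(C). -/

import Mathlib

open MvPolynomial

/-- A 2-minor `[a₁,a₂|b₁,b₂]` (with `a₁ < a₂`, `b₁ < b₂`) of the `m × n` matrix
of indeterminates `M = (x_{ij})`. -/
structure Minor2 (m n : ℕ) where
  a1 : Fin m
  a2 : Fin m
  b1 : Fin n
  b2 : Fin n
  ha : a1 < a2
  hb : b1 < b2

namespace Minor2

variable {m n : ℕ}

/-- The vertex set of a 2-minor. -/
def vertexSet (δ : Minor2 m n) : Set (Fin m × Fin n) :=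
  {(δ.a1, δ.b1), (δ.a1, δ.b2), (δ.a2, δ.b1), (δ.a2, δ.b2)}

/-- `{p,q}` is one of the two vertical edges of the minor `δ`. -/
def VertEdge (δ : Minor2 m n) (p q : Fin m × Fin n) : Prop :=
  ({p, q} : Set (Fin m × Fin n)) = {(δ.a1, δ.b1), (δ.a2, δ.b1)} ∨
  ({p, q} : Set (Fin m × Fin n)) = {(δ.a1, δ.b2), (δ.a2, δ.b2)}

/-- `{p,q}` is one of the two horizontal edges of the minor `δ`. -/
def HorizEdge (δ : Minor2 m n) (p q : Fin m × Fin n) : Prop :=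
  ({p, q} : Set (Fin m × Fin n)) = {(δ.a1, δ.b1), (δ.a1, δ.b2)} ∨
  ({p, q} : Set (Fin m × Fin n)) = {(δ.a2, δ.b1), (δ.a2, δ.b2)}

/-- `{p,q}` is an edge (vertical or horizontal) of the minor `δ`. -/
def IsEdge (δ : Minor2 m n) (p q : Fin m × Fin n) : Prop :=
  δ.VertEdge p q ∨ δ.HorizEdge p q

/-- The binomial `f_δ = x_{a₁b₁}x_{a₂b₂} − x_{a₁b₂}x_{a₂b₁}` of the 2-minor `δ`. -/
noncomputable def binom (K : Type*) [Field K] (δ : Minor2 m n) : MvPolynomial (Fin m × Fin n) K :=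
  X (δ.a1, δ.b1) * X (δ.a2, δ.b2) - X (δ.a1, δ.b2) * X (δ.a2, δ.b1)

end Minor2

/-- The vertex set `V(C)` of a collection `C` of 2-minors. -/
def vertexSetOf {m n : ℕ} (C : Set (Minor2 m n)) : Set (Fin m × Fin n) :=
  ⋃ δ ∈ C, δ.vertexSet

/-- The binomial ideal `I(C)` generated by the binomials of the minors in `C`. -/
noncomputable def minorIdeal (K : Type*) [Field K] {m n : ℕ} (C : Set (Minor2 m n)) :
    Ideal (MvPolynomial (Fin m × Fin n) K) :=
  Ideal.span {f | ∃ δ ∈ C, f = Minor2.binom K δ}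

/-- Two positions are joined by a vertical edge of some minor of `C`. -/
def vertAdj {m n : ℕ} (C : Set (Minor2 m n)) (p q : Fin m × Fin n) : Prop :=
  ∃ δ ∈ C, δ.VertEdge p q

/-- Two positions are joined by a horizontal edge of some minor of `C`. -/
def horizAdj {m n : ℕ} (C : Set (Minor2 m n)) (p q : Fin m × Fin n) : Prop :=
  ∃ δ ∈ C, δ.HorizEdge p q

/-- The maximal vertical interval of `C` containing a position, encoded as the class of the
position under connectivity by vertical edges of minors of `C`. -/
def vClass {m n : ℕ} (C : Set (Minor2 m n)) (p : Fin m × Fin n) : Quot (vertAdj C) :=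
  Quot.mk _ p

/-- The maximal horizontal interval of `C` containing a position. -/
def hClass {m n : ℕ} (C : Set (Minor2 m n)) (p : Fin m × Fin n) : Quot (horizAdj C) :=
  Quot.mk _ p

/-- The monomial map `φ` with `φ(x_{ab}) = h_i v_j`, where `H_i` and `V_j` are the maximal
horizontal and vertical intervals of `C` containing `x_{ab}` (variables not appearing in any
minor of `C` are sent to products of fresh variables, so that the kernel of `φ` is the
extension to `S` of the toric ideal `J_C ⊆ S_C`). -/
noncomputable def phiC (K : Type*) [Field K] {m n : ℕ} (C : Set (Minor2 m n)) :
    MvPolynomial (Fin m × Fin n) K →ₐ[K]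
      MvPolynomial (Quot (horizAdj C) ⊕ Quot (vertAdj C)) K :=
  aeval fun p => X (Sum.inl (hClass C p)) * X (Sum.inr (vClass C p))

/-- The toric ideal `J_C = ker φ`. -/
noncomputable def toricIdeal (K : Type*) [Field K] {m n : ℕ} (C : Set (Minor2 m n)) :
    Ideal (MvPolynomial (Fin m × Fin n) K) :=
  RingHom.ker (phiC K C)

/-- A subset `W ⊆ V(C)` is admissible if for every `δ ∈ C` either `W ∩ V(δ) = ∅`
or `W` contains an edge of `δ`. -/
def Admissible {m n : ℕ} (C : Set (Minor2 m n)) (W : Set (Fin m × Fin n)) : Prop :=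
  W ⊆ vertexSetOf C ∧
    ∀ δ ∈ C, W ∩ δ.vertexSet = ∅ ∨ ∃ p q, p ∈ W ∧ q ∈ W ∧ δ.IsEdge p q

/-- `C' = {δ ∈ C : V(δ) ∩ W = ∅}`. -/
def minorsAvoiding {m n : ℕ} (C : Set (Minor2 m n)) (W : Set (Fin m × Fin n)) :
    Set (Minor2 m n) :=
  {δ ∈ C | δ.vertexSet ∩ W = ∅}

/-- The ideal generated by the variables with index in `W`. -/
noncomputable def varIdeal (K : Type*) [Field K] {m n : ℕ} (W : Set (Fin m × Fin n)) :
    Ideal (MvPolynomial (Fin m × Fin n) K) :=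
  Ideal.span ((fun p => (X p : MvPolynomial (Fin m × Fin n) K)) '' W)

/-- The prime ideal `P_W(C) = (x_{ij} : x_{ij} ∈ W) + J_{C'}`,
where `C' = {δ ∈ C : V(δ) ∩ W = ∅}`. -/
noncomputable def PW (K : Type*) [Field K] {m n : ℕ} (C : Set (Minor2 m n))
    (W : Set (Fin m × Fin n)) : Ideal (MvPolynomial (Fin m × Fin n) K) :=
  varIdeal K W + toricIdeal K (minorsAvoiding C W)

/-- A cycle `σ : h_{i₁}, v_{j₁}, h_{i₂}, v_{j₂}, …, h_{i_r}, v_{j_r}` (`r ≥ 2`) of the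
bipartite graph `G(C)`, recorded by the intersection vertices
`p k = H_{i_k} ∩ V_{j_k}` and `q k = H_{i_{k+1}} ∩ V_{j_k}` (indices cyclic, `r = len + 2`). -/
structure CycleIn {m n : ℕ} (C : Set (Minor2 m n)) where
  len : ℕ
  p : Fin (len + 2) → Fin m × Fin n
  q : Fin (len + 2) → Fin m × Fin n
  p_mem : ∀ k, p k ∈ vertexSetOf C
  q_mem : ∀ k, q k ∈ vertexSetOf C
  shareV : ∀ k, vClass C (p k) = vClass C (q k)
  shareH : ∀ k, hClass C (q k) = hClass C (p (k + 1))
  injH : Function.Injective fun k => hClass C (p k)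
  injV : Function.Injective fun k => vClass C (p k)

/-- The binomial `f_σ` associated to a cycle `σ` of `G(C)`. -/
noncomputable def cycleBinom (K : Type*) [Field K] {m n : ℕ} {C : Set (Minor2 m n)}
    (σ : CycleIn C) : MvPolynomial (Fin m × Fin n) K :=
  (∏ k, X (σ.p k)) - (∏ k, X (σ.q k))

/-!
Let `P` be a minimal prime of `I(C)` and let `W` be the set of vertices of `C` whose variables lie
in `P`. Since `P` is prime and contains `f_δ`, it contains a variable of the diagonal of `δ` if and
only if it contains one of the antidiagonal, so `W` is admissible; hence `P_W(C)` contains `I(C)`.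
As `P_W(C)` is prime, by minimality of `P` it remains to see `P_W(C) ⊆ P`, that is, `J_{C'} ⊆ P`.
The residues of the variables form a point over the residue field of `P` that satisfies the
relations of `C'` and vanishes at no vertex of `C'`. Dividing each entry by the one in the base
column of its row shows that this point factors through the monomial map `φ`, so `P` contains
`ker φ = J_{C'}`.
-/

section KillVars

variable {σ R : Type*}

/-- The substitution setting the variables indexed by `W` to zero, as an endomorphism of the whole
polynomial ring rather than a map onto the ring in the remaining variables. -/
noncomputable def killVars (R : Type*) [CommSemiring R] (W : Set σ) :
    MvPolynomial σ R →ₐ[R] MvPolynomial σ R :=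
  aeval (Wᶜ.indicator X)

lemma killVars_X_of_mem [CommSemiring R] {W : Set σ} {i : σ} (hi : i ∈ W) :
    killVars R W (X i) = 0 := by
  simp [killVars, hi]

lemma killVars_X_of_notMem [CommSemiring R] {W : Set σ} {i : σ} (hi : i ∉ W) :
    killVars R W (X i) = X i := by
  simp [killVars, hi]

variable [CommRing R]

lemma sub_killVars_mem_span_X (W : Set σ) (f : MvPolynomial σ R) :
    f - killVars R W f ∈ Ideal.span (X '' W : Set (MvPolynomial σ R)) := by
  set I := Ideal.span (X '' W : Set (MvPolynomial σ R))
  have mk_comp_killVars :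
      (Ideal.Quotient.mkₐ R I).comp (killVars R W) = Ideal.Quotient.mkₐ R I := by
    refine MvPolynomial.algHom_ext fun i => ?_
    by_cases hi : i ∈ W
    · have hX : Ideal.Quotient.mkₐ R I (X i) = 0 :=
        Ideal.Quotient.eq_zero_iff_mem.2 (Ideal.subset_span ⟨i, hi, rfl⟩)
      rw [AlgHom.comp_apply, killVars_X_of_mem hi, map_zero, hX]
    · rw [AlgHom.comp_apply, killVars_X_of_notMem hi]
  exact Ideal.Quotient.eq.1 (DFunLike.congr_fun mk_comp_killVars f).symm

lemma span_X_sup_ker_eq_ker_comp_killVars {A : Type*} [Semiring A] [Algebra R A] (W : Set σ)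
    (φ : MvPolynomial σ R →ₐ[R] A) (χ : A →ₐ[R] A) (hχ : χ.comp φ = φ.comp (killVars R W)) :
    Ideal.span (X '' W) ⊔ RingHom.ker φ = RingHom.ker (φ.comp (killVars R W)) := by
  apply le_antisymm
  · refine sup_le (Ideal.span_le.2 ?_) fun f hf => ?_
    · rintro _ ⟨i, hi, rfl⟩
      simp [RingHom.mem_ker, killVars_X_of_mem hi]
    · rw [RingHom.mem_ker] at hf ⊢
      rw [← hχ, AlgHom.comp_apply, hf, map_zero]
  · intro f hf
    rw [← sub_add_cancel f (killVars R W f)]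
    exact Submodule.add_mem_sup (sub_killVars_mem_span_X W f) hf

end KillVars

section Minors

variable {m n : ℕ} {C : Set (Minor2 m n)} {W : Set (Fin m × Fin n)}

namespace Minor2

variable {δ : Minor2 m n} {p q : Fin m × Fin n}

lemma mem_vertexSet_iff :
    p ∈ δ.vertexSet ↔ (p.1 = δ.a1 ∨ p.1 = δ.a2) ∧ (p.2 = δ.b1 ∨ p.2 = δ.b2) := by
  simp only [vertexSet, Set.mem_insert_iff, Set.mem_singleton_iff, Prod.ext_iff]
  tauto

lemma HorizEdge.mem_vertexSet (h : δ.HorizEdge p q) : p ∈ δ.vertexSet ∧ q ∈ δ.vertexSet := by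
  simp only [HorizEdge, Set.pair_eq_pair_iff] at h
  rcases h with (⟨rfl, rfl⟩ | ⟨rfl, rfl⟩) | (⟨rfl, rfl⟩ | ⟨rfl, rfl⟩) <;> simp [vertexSet]

lemma HorizEdge.fst_eq (h : δ.HorizEdge p q) : p.1 = q.1 := by
  simp only [HorizEdge, Set.pair_eq_pair_iff] at h
  rcases h with (⟨rfl, rfl⟩ | ⟨rfl, rfl⟩) | (⟨rfl, rfl⟩ | ⟨rfl, rfl⟩) <;> rfl

lemma vertEdge_iff :
    δ.VertEdge p q ↔ ∃ b, (b = δ.b1 ∨ b = δ.b2) ∧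
      (p = (δ.a1, b) ∧ q = (δ.a2, b) ∨ p = (δ.a2, b) ∧ q = (δ.a1, b)) := by
  simp [VertEdge, Set.pair_eq_pair_iff, or_and_right, exists_or]

lemma exists_isEdge_iff :
    (∃ p q, p ∈ W ∧ q ∈ W ∧ δ.IsEdge p q) ↔
      ((δ.a1, δ.b1) ∈ W ∨ (δ.a2, δ.b2) ∈ W) ∧ ((δ.a1, δ.b2) ∈ W ∨ (δ.a2, δ.b1) ∈ W) := by
  constructor
  · rintro ⟨p, q, hp, hq, h⟩
    simp only [IsEdge, VertEdge, HorizEdge, Set.pair_eq_pair_iff] at h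
    rcases h with ((⟨rfl, rfl⟩ | ⟨rfl, rfl⟩) | (⟨rfl, rfl⟩ | ⟨rfl, rfl⟩)) |
      ((⟨rfl, rfl⟩ | ⟨rfl, rfl⟩) | (⟨rfl, rfl⟩ | ⟨rfl, rfl⟩)) <;> tauto
  · rintro ⟨h₁₁ | h₂₂, h₁₂ | h₂₁⟩
    · exact ⟨_, _, h₁₁, h₁₂, .inr (.inl rfl)⟩
    · exact ⟨_, _, h₁₁, h₂₁, .inl (.inl rfl)⟩
    · exact ⟨_, _, h₁₂, h₂₂, .inl (.inr rfl)⟩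
    · exact ⟨_, _, h₂₁, h₂₂, .inr (.inr rfl)⟩

lemma mul_eq_mul_of_columns {A : Type*} [CommMagma A] {x : Fin m × Fin n → A}
    (hx : x (δ.a1, δ.b1) * x (δ.a2, δ.b2) = x (δ.a1, δ.b2) * x (δ.a2, δ.b1)) {b c : Fin n}
    (hb : b = δ.b1 ∨ b = δ.b2) (hc : c = δ.b1 ∨ c = δ.b2) :
    x (δ.a1, b) * x (δ.a2, c) = x (δ.a1, c) * x (δ.a2, b) := by
  rcases hb with rfl | rfl <;> rcases hc with rfl | rfl
  exacts [rfl, hx, hx.symm, rfl]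

end Minor2

lemma vertexSet_subset_vertexSetOf {δ : Minor2 m n} (hδ : δ ∈ C) : δ.vertexSet ⊆ vertexSetOf C :=
  Set.subset_biUnion_of_mem (u := Minor2.vertexSet) hδ

section BasedMinors

/-- Corner-interval minors with an arbitrary base column in each row: every minor of `C` has the
base positions of its two rows as one of its vertical edges. Corner-interval minors are the case of
the constant base column `0`. -/
def IsBased (base : Fin m → Fin n) (C : Set (Minor2 m n)) : Prop :=
  ∀ δ ∈ C, δ.VertEdge (δ.a1, base δ.a1) (δ.a2, base δ.a2)

variable {base : Fin m → Fin n}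

lemma IsBased.mono {D : Set (Minor2 m n)} (hC : IsBased base C) (hD : D ⊆ C) : IsBased base D :=
  fun δ hδ => hC δ (hD hδ)

lemma IsBased.exists_column (hC : IsBased base C) {δ : Minor2 m n} (hδ : δ ∈ C) :
    ∃ c, (c = δ.b1 ∨ c = δ.b2) ∧ base δ.a1 = c ∧ base δ.a2 = c := by
  obtain ⟨c, hc, ⟨h₁, h₂⟩ | ⟨h₁, -⟩⟩ := Minor2.vertEdge_iff.1 (hC δ hδ)
  · exact ⟨c, hc, congrArg Prod.snd h₁, congrArg Prod.snd h₂⟩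
  · exact absurd (congrArg Prod.fst h₁) δ.ha.ne

lemma IsBased.base_mem_vertexSetOf (hC : IsBased base C) {p : Fin m × Fin n}
    (hp : p ∈ vertexSetOf C) : (p.1, base p.1) ∈ vertexSetOf C := by
  obtain ⟨δ, hδ, hpδ⟩ := Set.mem_iUnion₂.1 hp
  obtain ⟨c, hc, h₁, h₂⟩ := hC.exists_column hδ
  refine vertexSet_subset_vertexSetOf hδ (Minor2.mem_vertexSet_iff.2 ?_)
  rcases (Minor2.mem_vertexSet_iff.1 hpδ).1 with h | h <;> simp [h, h₁, h₂, hc]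

/-- Take `h` to be the value of `x` at the base position of the row and `v = x / h`: the relation of
a minor through the base column says that `v` agrees along its other vertical edge. -/
lemma IsBased.exists_factorization (hC : IsBased base C) {L : Type*} [CommGroupWithZero L]
    {x : Fin m × Fin n → L}
    (hx : ∀ δ ∈ C, x (δ.a1, δ.b1) * x (δ.a2, δ.b2) = x (δ.a1, δ.b2) * x (δ.a2, δ.b1))
    (hx₀ : ∀ p ∈ vertexSetOf C, x p ≠ 0) :
    ∃ h v : Fin m × Fin n → L, (∀ p, h p * v p = x p) ∧
      (∀ p q, horizAdj C p q → h p = h q) ∧ (∀ p q, vertAdj C p q → v p = v q) := by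
  classical
  let h : Fin m × Fin n → L := fun p => if p ∈ vertexSetOf C then x (p.1, base p.1) else 1
  have h_ne_zero (p) : h p ≠ 0 := by
    by_cases hp : p ∈ vertexSetOf C
    · simpa [h, hp] using hx₀ _ (hC.base_mem_vertexSetOf hp)
    · simp [h, hp]
  refine ⟨h, fun p => x p / h p, fun p => mul_div_cancel₀ _ (h_ne_zero p), ?_, ?_⟩
  · rintro p q ⟨δ, hδ, hpq⟩
    have hp := vertexSet_subset_vertexSetOf hδ hpq.mem_vertexSet.1
    have hq := vertexSet_subset_vertexSetOf hδ hpq.mem_vertexSet.2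
    simp [h, hp, hq, hpq.fst_eq]
  · rintro p q ⟨δ, hδ, hpq⟩
    obtain ⟨b, hb, hpq⟩ := Minor2.vertEdge_iff.1 hpq
    obtain ⟨c, hc, hc₁, hc₂⟩ := hC.exists_column hδ
    have mem₁ : (δ.a1, b) ∈ vertexSetOf C :=
      vertexSet_subset_vertexSetOf hδ (Minor2.mem_vertexSet_iff.2 ⟨.inl rfl, hb⟩)
    have mem₂ : (δ.a2, b) ∈ vertexSetOf C :=
      vertexSet_subset_vertexSetOf hδ (Minor2.mem_vertexSet_iff.2 ⟨.inr rfl, hb⟩)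
    have ratio_eq : x (δ.a1, b) / h (δ.a1, b) = x (δ.a2, b) / h (δ.a2, b) := by
      rw [div_eq_div_iff (h_ne_zero _) (h_ne_zero _)]
      simpa only [h, mem₁, mem₂, if_true, hc₁, hc₂, mul_comm (x (δ.a2, b))] using
        Minor2.mul_eq_mul_of_columns (hx δ hδ) hb hc
    rcases hpq with ⟨rfl, rfl⟩ | ⟨rfl, rfl⟩
    exacts [ratio_eq, ratio_eq.symm]

end BasedMinors

section Ideals

variable {K : Type*} [Field K]

lemma binom_mem_minorIdeal {δ : Minor2 m n} (hδ : δ ∈ C) : δ.binom K ∈ minorIdeal K C :=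
  Ideal.subset_span ⟨δ, hδ, rfl⟩

lemma minorIdeal_mono {D : Set (Minor2 m n)} (hDC : D ⊆ C) : minorIdeal K D ≤ minorIdeal K C :=
  Ideal.span_mono fun _ ⟨δ, hδ, hf⟩ => ⟨δ, hDC hδ, hf⟩

lemma X_mem_varIdeal {p : Fin m × Fin n} (hp : p ∈ W) : X p ∈ varIdeal K W :=
  Ideal.subset_span ⟨p, hp, rfl⟩

lemma binom_mem_toricIdeal {δ : Minor2 m n} (hδ : δ ∈ C) : δ.binom K ∈ toricIdeal K C := by
  have row₁ : hClass C (δ.a1, δ.b1) = hClass C (δ.a1, δ.b2) := Quot.sound ⟨δ, hδ, .inl rfl⟩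
  have row₂ : hClass C (δ.a2, δ.b1) = hClass C (δ.a2, δ.b2) := Quot.sound ⟨δ, hδ, .inr rfl⟩
  have col₁ : vClass C (δ.a1, δ.b1) = vClass C (δ.a2, δ.b1) := Quot.sound ⟨δ, hδ, .inl rfl⟩
  have col₂ : vClass C (δ.a1, δ.b2) = vClass C (δ.a2, δ.b2) := Quot.sound ⟨δ, hδ, .inr rfl⟩
  simp only [toricIdeal, RingHom.mem_ker, phiC, Minor2.binom, map_sub, map_mul, aeval_X,
    row₁, row₂, col₁, col₂]
  ring

lemma Minor2.binom_mem_varIdeal {δ : Minor2 m n} (h : ∃ p q, p ∈ W ∧ q ∈ W ∧ δ.IsEdge p q) :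
    δ.binom K ∈ varIdeal K W := by
  obtain ⟨hdiag, hanti⟩ := Minor2.exists_isEdge_iff.1 h
  refine sub_mem ?_ ?_
  · exact hdiag.elim (fun h => Ideal.mul_mem_right _ _ (X_mem_varIdeal h))
      (fun h => Ideal.mul_mem_left _ _ (X_mem_varIdeal h))
  · exact hanti.elim (fun h => Ideal.mul_mem_right _ _ (X_mem_varIdeal h))
      (fun h => Ideal.mul_mem_left _ _ (X_mem_varIdeal h))

lemma Admissible.minorIdeal_le_PW (hW : Admissible C W) : minorIdeal K C ≤ PW K C W := by
  refine Ideal.span_le.2 ?_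
  rintro _ ⟨δ, hδ, rfl⟩
  rcases hW.2 δ hδ with hdisj | hedge
  · exact Ideal.mem_sup_right (binom_mem_toricIdeal ⟨hδ, by rwa [Set.inter_comm]⟩)
  · exact Ideal.mem_sup_left (Minor2.binom_mem_varIdeal hedge)

lemma mem_iff_of_hClass_minorsAvoiding_eq {p q : Fin m × Fin n}
    (h : hClass (minorsAvoiding C W) p = hClass (minorsAvoiding C W) q) : p ∈ W ↔ q ∈ W := by
  have invariant (r s) (hrs : horizAdj (minorsAvoiding C W) r s) : (r ∈ W) = (s ∈ W) := by
    obtain ⟨δ, ⟨-, hδ⟩, hrs⟩ := hrs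
    have avoids (t) (ht : t ∈ δ.vertexSet) : t ∉ W :=
      Set.disjoint_left.1 (Set.disjoint_iff_inter_eq_empty.2 hδ) ht
    simp [avoids r hrs.mem_vertexSet.1, avoids s hrs.mem_vertexSet.2]
  exact (congrArg (Quot.lift (· ∈ W) invariant) h).to_iff

/-- The minors of `C'` avoid `W`, so killing the variables in `W` amounts, after `φ`, to killing the
`h`-variables of their horizontal intervals. -/
lemma PW_eq_ker (K : Type*) [Field K] (C : Set (Minor2 m n)) (W : Set (Fin m × Fin n)) :
    PW K C W = RingHom.ker ((phiC K (minorsAvoiding C W)).comp (killVars K W)) := by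
  set D := minorsAvoiding C W
  refine span_X_sup_ker_eq_ker_comp_killVars W (phiC K D)
    (killVars K (Sum.inl '' (hClass D '' W))) (MvPolynomial.algHom_ext fun p => ?_)
  have hinr : (Sum.inr (vClass D p) : Quot (horizAdj D) ⊕ Quot (vertAdj D)) ∉
      Sum.inl '' (hClass D '' W) := by simp
  by_cases hp : p ∈ W
  · have hinl : (Sum.inl (hClass D p) : Quot (horizAdj D) ⊕ Quot (vertAdj D)) ∈
        Sum.inl '' (hClass D '' W) := ⟨_, ⟨p, hp, rfl⟩, rfl⟩
    simp [phiC, killVars_X_of_mem hinl, killVars_X_of_mem hp]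
  · have hinl : (Sum.inl (hClass D p) : Quot (horizAdj D) ⊕ Quot (vertAdj D)) ∉
        Sum.inl '' (hClass D '' W) := by
      rintro ⟨_, ⟨q, hq, rfl⟩, hqp⟩
      exact hp ((mem_iff_of_hClass_minorsAvoiding_eq (Sum.inl.inj hqp)).1 hq)
    simp [phiC, killVars_X_of_notMem hinl, killVars_X_of_notMem hinr, killVars_X_of_notMem hp]

lemma PW_isPrime (K : Type*) [Field K] (C : Set (Minor2 m n)) (W : Set (Fin m × Fin n)) :
    (PW K C W).IsPrime :=
  PW_eq_ker K C W ▸ RingHom.ker_isPrime _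

lemma toricIdeal_le_ker_aeval {A : Type*} [CommSemiring A] [Algebra K A] {h v : Fin m × Fin n → A}
    (hh : ∀ p q, horizAdj C p q → h p = h q) (hv : ∀ p q, vertAdj C p q → v p = v q) :
    toricIdeal K C ≤ RingHom.ker (aeval (R := K) fun p => h p * v p) := by
  let θ : MvPolynomial (Quot (horizAdj C) ⊕ Quot (vertAdj C)) K →ₐ[K] A :=
    aeval (Sum.elim (Quot.lift h hh) (Quot.lift v hv))
  have θ_comp_phiC : θ.comp (phiC K C) = aeval fun p => h p * v p :=
    MvPolynomial.algHom_ext fun p => by simp [θ, phiC, hClass, vClass]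
  intro f hf
  rw [toricIdeal, RingHom.mem_ker] at hf
  rw [RingHom.mem_ker, ← θ_comp_phiC, AlgHom.comp_apply, hf, map_zero]

variable {P : Ideal (MvPolynomial (Fin m × Fin n) K)} [P.IsPrime]

lemma IsBased.toricIdeal_le {base : Fin m → Fin n} (hC : IsBased base C)
    (hCP : minorIdeal K C ≤ P) (hX : ∀ p ∈ vertexSetOf C, X p ∉ P) : toricIdeal K C ≤ P := by
  let x : Fin m × Fin n → P.ResidueField := fun p => algebraMap _ _ (X p : MvPolynomial _ K)
  have minor_relation (δ) (hδ : δ ∈ C) :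
      x (δ.a1, δ.b1) * x (δ.a2, δ.b2) = x (δ.a1, δ.b2) * x (δ.a2, δ.b1) := by
    have hbinom := Ideal.algebraMap_residueField_eq_zero.2 (hCP (binom_mem_minorIdeal hδ))
    simpa only [Minor2.binom, map_sub, map_mul, sub_eq_zero] using hbinom
  have x_ne_zero (p) (hp : p ∈ vertexSetOf C) : x p ≠ 0 :=
    mt Ideal.algebraMap_residueField_eq_zero.1 (hX p hp)
  obtain ⟨h, v, hmul, hh, hv⟩ := hC.exists_factorization minor_relation x_ne_zero
  intro f hf
  have aeval_x_eq_zero : aeval x f = 0 := by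
    simpa only [hmul, RingHom.mem_ker] using toricIdeal_le_ker_aeval hh hv hf
  have aeval_x : aeval x f = algebraMap _ P.ResidueField f :=
    (aeval_algebraMap_apply P.ResidueField X f).trans (by rw [aeval_X_left_apply])
  exact Ideal.algebraMap_residueField_eq_zero.1 (aeval_x ▸ aeval_x_eq_zero)

lemma Minor2.diag_mem_iff_anti_mem {δ : Minor2 m n} (hδ : δ.binom K ∈ P) :
    X (δ.a1, δ.b1) ∈ P ∨ X (δ.a2, δ.b2) ∈ P ↔ X (δ.a1, δ.b2) ∈ P ∨ X (δ.a2, δ.b1) ∈ P := by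
  have hP : P.IsPrime := inferInstance
  rw [← hP.mul_mem_iff_mem_or_mem, ← hP.mul_mem_iff_mem_or_mem]
  exact ⟨fun h => (P.sub_mem_iff_right h).1 hδ, fun h => (P.sub_mem_iff_left h).1 hδ⟩

/-- The vertices of `C` whose variable lies in `I`: the set `W` for which a minimal prime `I` of
`I(C)` is `P_W(C)`. -/
def verticesIn (C : Set (Minor2 m n)) (I : Ideal (MvPolynomial (Fin m × Fin n) K)) :
    Set (Fin m × Fin n) :=
  {p ∈ vertexSetOf C | X p ∈ I}

lemma admissible_verticesIn (hCP : minorIdeal K C ≤ P) : Admissible C (verticesIn C P) := by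
  refine ⟨fun p hp => hp.1, fun δ hδ => or_iff_not_imp_left.2 fun hmeet => ?_⟩
  obtain ⟨r, ⟨-, hrP⟩, hrδ⟩ := Set.nonempty_iff_ne_empty.2 hmeet
  have corner_mem_iff (p) (hp : p ∈ δ.vertexSet) : p ∈ verticesIn C P ↔ X p ∈ P :=
    and_iff_right (vertexSet_subset_vertexSetOf hδ hp)
  have diag_iff_anti := Minor2.diag_mem_iff_anti_mem (hCP (binom_mem_minorIdeal hδ))
  have diag_or_anti : (X (δ.a1, δ.b1) ∈ P ∨ X (δ.a2, δ.b2) ∈ P) ∨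
      (X (δ.a1, δ.b2) ∈ P ∨ X (δ.a2, δ.b1) ∈ P) := by
    rcases hrδ with rfl | rfl | rfl | rfl <;> simp only [hrP, true_or, or_true]
  rw [Minor2.exists_isEdge_iff]
  simp only [corner_mem_iff, Minor2.mem_vertexSet_iff, true_or, or_true, and_self]
  exact ⟨diag_or_anti.elim id diag_iff_anti.2, diag_or_anti.elim diag_iff_anti.1 id⟩

lemma IsBased.PW_verticesIn_le {base : Fin m → Fin n} (hC : IsBased base C)
    (hCP : minorIdeal K C ≤ P) : PW K C (verticesIn C P) ≤ P := by
  refine sup_le (Ideal.span_le.2 ?_) ?_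
  · rintro _ ⟨p, hp, rfl⟩
    exact hp.2
  · have avoiding_subset : minorsAvoiding C (verticesIn C P) ⊆ C := Set.sep_subset _ _
    refine (hC.mono avoiding_subset).toricIdeal_le ?_ fun p hp hpP => ?_
    · exact (minorIdeal_mono avoiding_subset).trans hCP
    · obtain ⟨δ, ⟨hδ, hdisj⟩, hpδ⟩ := Set.mem_iUnion₂.1 hp
      exact (Set.disjoint_iff_inter_eq_empty.2 hdisj).notMem_of_mem_left hpδ
        ⟨vertexSet_subset_vertexSetOf hδ hpδ, hpP⟩

end Ideals

end Minors

theorem statement5_general {K : Type*} [Field K] {m n : ℕ} {C : Set (Minor2 m n)}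
    {base : Fin m → Fin n} (hC : IsBased base C)
    {P : Ideal (MvPolynomial (Fin m × Fin n) K)} (hP : P ∈ (minorIdeal K C).minimalPrimes) :
    ∃ W : Set (Fin m × Fin n), Admissible C W ∧ P = PW K C W := by
  obtain ⟨⟨hPrime, hCP⟩, hmin⟩ := hP
  have hadm : Admissible C (verticesIn C P) := admissible_verticesIn hCP
  have hle : PW K C (verticesIn C P) ≤ P := hC.PW_verticesIn_le hCP
  exact ⟨_, hadm, (hmin ⟨PW_isPrime K C _, hadm.minorIdeal_le_PW⟩ hle).antisymm hle⟩

theorem statement5 (K : Type*) [Field K] (m n : ℕ) [NeZero n]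
    (C : Set (Minor2 m n)) (hC : ∀ δ ∈ C, δ.b1 = 0)
    (P : Ideal (MvPolynomial (Fin m × Fin n) K))
    (hP : P ∈ (minorIdeal K C).minimalPrimes) :
    ∃ W : Set (Fin m × Fin n), Admissible C W ∧ P = PW K C W := by
  exact statement5_general (base := fun _ => 0) (fun δ hδ => .inl (by rw [hC δ hδ])) hP
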